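/- Let (N, B, L) be a Hadamard triple in ℝ with #B < N, and let μ_{N,B} be the self-similar measure associated with (N,B), i.e., the unique Borel probability measure μ on ℝ satisfying μ = (1/#B) ∑_{b∈B} μ ∘ τ_b^{-1} where τ_b(x) = (x+b)/N. Let E_N = { v/u : u, v ∈ ℕ, gcd(u,v) = 1, gcd(uv, N) = 1 }. Then for any t_1, t_2, …, t_k ∈ E_N, the collection of sets { Λ ⊂ ℝ : 0 ∈ Λ, and Λ, t_1·Λ, t_2·Λ, …, t_k·Λ are all spectra of μ_{N,B} } is infinite. -/

import Mathlib

open MeasureTheory ENNReal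

/-- `(N,B,L)` is a Hadamard triple in `ℝ`. -/
def IsHadamardTriple (N : ℕ) (B L : Finset ℤ) : Prop :=
  2 ≤ N ∧ 2 ≤ B.card ∧ B.card = L.card ∧
    ∀ l ∈ L, ∀ l' ∈ L, l ≠ l' →
      ∑ b ∈ B, Complex.exp (2 * Real.pi * Complex.I * (b : ℂ) * ((l : ℂ) - (l' : ℂ)) / (N : ℂ)) = 0

/-- The exponential function `e_λ(x) = e^{2πiλx}`. -/
noncomputable def expFun (l : ℝ) : ℝ → ℂ :=
  fun x => Complex.exp (2 * Real.pi * Complex.I * (l : ℂ) * (x : ℂ))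

/-- `Λ` is a spectrum of `μ`: the family `{e^{2πiλx} : λ ∈ Λ}` forms an
orthonormal basis of `L²(μ)`. -/
def IsSpectrum (μ : Measure ℝ) (Λ : Set ℝ) : Prop :=
  ∃ F : Λ → Lp ℂ 2 μ,
    (∀ l : Λ, (F l : ℝ → ℂ) =ᵐ[μ] expFun (l : ℝ)) ∧
    Orthonormal ℂ F ∧
    (Submodule.span ℂ (Set.range F)).topologicalClosure = ⊤

/-- The set `E_N` of quotients `v/u` of coprime positive integers with `uv` coprime to `N`. -/
def eigenSet (N : ℕ) : Set ℝ :=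
  { t : ℝ | ∃ u v : ℕ, 0 < u ∧ 0 < v ∧ Nat.Coprime u v ∧ Nat.Coprime (u * v) N ∧
      t = (v : ℝ) / (u : ℝ) }

noncomputable def ex (x : ℝ) : ℂ := Complex.exp (2 * Real.pi * Complex.I * (x : ℂ))

lemma ex_add (x y : ℝ) : ex (x + y) = ex x * ex y := by
  unfold ex; rw [← Complex.exp_add]; congr 1; push_cast; ring

lemma ex_zero : ex 0 = 1 := by simp [ex]

lemma ex_int (n : ℤ) : ex n = 1 := by
  unfold ex
  rw [Complex.exp_eq_one_iff]
  exact ⟨n, by push_cast; ring⟩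

lemma norm_ex (x : ℝ) : ‖ex x‖ = 1 := by
  have := Complex.norm_exp_ofReal_mul_I (2 * Real.pi * x)
  unfold ex
  rw [← this]; congr 2; push_cast; ring

lemma ex_neg (x : ℝ) : ex (-x) = (starRingEnd ℂ) (ex x) := by
  unfold ex
  rw [← Complex.exp_conj]
  congr 1
  simp [map_ofNat]

lemma ex_nat_mul (n : ℕ) (x : ℝ) : ex (n * x) = ex x ^ n := by
  unfold ex; rw [← Complex.exp_nat_mul]; congr 1; push_cast; ring

lemma ex_prim (N : ℕ) (hN : N ≠ 0) : IsPrimitiveRoot (ex (1 / N)) N := by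
  have := Complex.isPrimitiveRoot_exp N hN
  unfold ex
  convert this using 2
  push_cast; ring

lemma ex_mod (N : ℕ) (hN : N ≠ 0) (w : ℕ) (z : ℤ) :
    ex (w * z / N) = (ex (1 / N) ^ w) ^ (z % N).toNat := by
  have hN' : (N : ℝ) ≠ 0 := by exact_mod_cast hN
  rw [← pow_mul, ← ex_nat_mul]
  have h1 : (((z % N).toNat : ℤ)) = z % N := Int.toNat_of_nonneg (Int.emod_nonneg _ (by exact_mod_cast hN))
  have h2 : ((z % N).toNat : ℝ) = ((z % N : ℤ) : ℝ) := by exact_mod_cast congrArg (Int.cast : ℤ → ℝ) h1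
  have h3 : (z : ℝ) = (N : ℝ) * ((z / N : ℤ) : ℝ) + ((z % N : ℤ) : ℝ) := by
    exact_mod_cast (Int.mul_ediv_add_emod z N).symm
  have : (w * z / N : ℝ) = ((w * (z / N) : ℤ) : ℝ) + ((w * (z % N).toNat : ℕ) : ℝ) * (1 / N) := by
    push_cast
    rw [h2, h3]; field_simp
  rw [this, ex_add, ex_int, one_mul]

lemma galois (N : ℕ) (hN : N ≠ 0) (B : Finset ℤ) (g : ℤ → ℤ) (w : ℕ) (hw : Nat.Coprime w N)
    (h : ∑ b ∈ B, ex ((g b : ℝ) / N) = 0) : ∑ b ∈ B, ex ((w : ℝ) * (g b : ℝ) / N) = 0 := by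
  have hp := ex_prim N hN
  set ζ := ex (1 / N) with hζ
  let P : Polynomial ℤ := ∑ b ∈ B, Polynomial.X ^ ((g b) % N).toNat
  have hP : ∀ u : ℕ, Polynomial.aeval (ζ ^ u) P = ∑ b ∈ B, ex ((u : ℝ) * (g b : ℝ) / N) := by
    intro u
    simp only [P, map_sum, map_pow, Polynomial.aeval_X]
    exact Finset.sum_congr rfl fun b _ => (ex_mod N hN u (g b)).symm
  have h0 : Polynomial.aeval ζ P = 0 := by
    have := hP 1
    rw [pow_one] at this
    rw [this, ← h]
    simp
  rw [← hP w]
  have hint : IsIntegral ℤ ζ := hp.isIntegral (Nat.pos_of_ne_zero hN)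
  have hd := minpoly.isIntegrallyClosed_dvd hint h0
  rw [hp.minpoly_eq_pow_coprime hw] at hd
  obtain ⟨q, hq⟩ := hd
  rw [hq]
  simp

noncomputable def mB (B : Finset ℤ) (x : ℝ) : ℂ := (B.card : ℂ)⁻¹ * ∑ b ∈ B, ex (b * x)

lemma mB_add_int (B : Finset ℤ) (x : ℝ) (n : ℤ) : mB B (x + n) = mB B x := by
  unfold mB
  congr 1
  refine Finset.sum_congr rfl fun b _ => ?_
  rw [mul_add, ex_add]
  have := ex_int (b * n)
  push_cast at this
  rw [this, mul_one]

/-- Orthogonality form of Hadamard triple. -/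
def Had (N : ℕ) (B L : Finset ℤ) : Prop :=
  2 ≤ N ∧ 2 ≤ B.card ∧ B.card = L.card ∧
    ∀ w : ℕ, Nat.Coprime w N → ∀ l ∈ L, ∀ l' ∈ L, l ≠ l' →
      ∑ b ∈ B, ex ((w : ℝ) * ((b * (l - l') : ℤ) : ℝ) / N) = 0

lemma parseval {N : ℕ} {B L : Finset ℤ} (h : Had N B L) (w : ℕ) (hw : Nat.Coprime w N) (x : ℝ) :
    ∑ l ∈ L, ‖mB B (x + w * l / N)‖ ^ 2 = 1 := by
  obtain ⟨hN, hB, hBL, hH⟩ := h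
  have hM : (B.card : ℂ) ≠ 0 := by
    have : B.card ≠ 0 := by omega
    exact_mod_cast this
  let A : Matrix L B ℂ := fun l b => ex (w * ((b : ℤ) * (l : ℤ) : ℤ) / N)
  have h1 : A * ((B.card : ℂ)⁻¹ • A.conjTranspose) = 1 := by
    ext l l'
    rw [Matrix.mul_smul, Matrix.smul_apply, Matrix.mul_apply]
    simp only [Matrix.conjTranspose_apply, Complex.star_def]
    simp only [A, ← ex_neg, ← ex_add]
    by_cases hl : l = l'
    · subst hl
      simp [ex_zero, hM]
    · rw [Matrix.one_apply_ne hl]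
      have := hH w hw l l.2 l' l'.2 (fun h => hl (Subtype.ext h))
      rw [← Finset.sum_coe_sort] at this
      rw [smul_eq_zero]; right
      rw [← this]
      refine Finset.sum_congr rfl fun b _ => ?_
      congr 1; push_cast; ring
  have h2 : ((B.card : ℂ)⁻¹ • A.conjTranspose) * A = 1 := by
    have e : L ≃ B := Fintype.equivOfCardEq (by simp [hBL])
    rw [Matrix.mul_eq_one_comm_of_equiv e] at h1
    exact h1
  have h3 : ∀ b b' : B, ∑ l : L, (starRingEnd ℂ) (A l b) * A l b' = if b = b' then (B.card : ℂ) else 0 := by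
    intro b b'
    have := congrFun (congrFun h2 b) b'
    rw [Matrix.smul_mul, Matrix.smul_apply, Matrix.mul_apply, Matrix.one_apply] at this
    simp only [Matrix.conjTranspose_apply, Complex.star_def, smul_eq_mul] at this
    rw [inv_mul_eq_iff_eq_mul₀ hM] at this
    rw [this]; simp
  have h4 : ∀ l : L, mB B (x + w * (l : ℤ) / N) = (B.card : ℂ)⁻¹ * ∑ b : B, ex ((b : ℤ) * x) * A l b := by
    intro l
    unfold mB
    congr 1
    rw [← Finset.sum_coe_sort]
    refine Finset.sum_congr rfl fun b _ => ?_
    simp only [A]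
    rw [← ex_add]; congr 1; push_cast; ring
  have h5 : ∑ l : L, (starRingEnd ℂ) (∑ b : B, ex ((b : ℤ) * x) * A l b) * (∑ b : B, ex ((b : ℤ) * x) * A l b) = (B.card : ℂ) * B.card := by
    simp only [map_sum, map_mul, Finset.sum_mul_sum]
    have : ∀ b : B, ∑ l : L, ∑ b' : B, (starRingEnd ℂ) (ex ((b : ℤ) * x)) * (starRingEnd ℂ) (A l b) * (ex ((b' : ℤ) * x) * A l b') = B.card := by
      intro b
      rw [Finset.sum_comm]
      have : ∀ b' : B, ∑ l : L, (starRingEnd ℂ) (ex ((b : ℤ) * x)) * (starRingEnd ℂ) (A l b) * (ex ((b' : ℤ) * x) * A l b') = (starRingEnd ℂ) (ex ((b : ℤ) * x)) * ex ((b' : ℤ) * x) * if b = b' then (B.card : ℂ) else 0 := by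
        intro b'
        rw [← h3 b b', Finset.mul_sum]
        exact Finset.sum_congr rfl fun l _ => by ring
      simp only [this]
      simp only [mul_ite, mul_zero, Finset.sum_ite_eq, Finset.mem_univ, if_true]
      rw [← ex_neg, ← ex_add]; simp [ex_zero]
    rw [Finset.sum_comm, Finset.sum_congr rfl fun b _ => this b]
    simp
  rw [← Finset.sum_coe_sort]
  have h6 : ((∑ l : L, ‖mB B (x + w * (l : ℤ) / N)‖ ^ 2 : ℝ) : ℂ) = 1 := by
    push_cast
    simp only [← Complex.conj_mul', h4]
    simp only [map_mul, map_inv₀, Complex.conj_natCast]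
    have : ∀ l : L, (B.card : ℂ)⁻¹ * (starRingEnd ℂ) (∑ b : B, ex ((b : ℤ) * x) * A l b) * ((B.card : ℂ)⁻¹ * ∑ b : B, ex ((b : ℤ) * x) * A l b) = (B.card : ℂ)⁻¹ * (B.card : ℂ)⁻¹ * ((starRingEnd ℂ) (∑ b : B, ex ((b : ℤ) * x) * A l b) * (∑ b : B, ex ((b : ℤ) * x) * A l b)) := fun l => by ring
    simp only [this]
    rw [← Finset.mul_sum, h5]
    field_simp
  exact_mod_cast h6

noncomputable def PK (N : ℕ) (B : Finset ℤ) (K : ℕ) (x : ℝ) : ℂ :=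
  ∏ j ∈ Finset.range K, mB B (x / N ^ (j + 1))

lemma mB_zero {B : Finset ℤ} (hB : B.card ≠ 0) : mB B 0 = 1 := by
  simp [mB, ex_zero, hB]

lemma PK_zero {B : Finset ℤ} (hB : B.card ≠ 0) (N K : ℕ) : PK N B K 0 = 1 := by
  simp [PK, mB_zero hB]

lemma PK_add {N : ℕ} (hN : N ≠ 0) (B : Finset ℤ) (K : ℕ) (x : ℝ) (n : ℤ) :
    PK N B K (x + N ^ K * n) = PK N B K x := by
  unfold PK
  refine Finset.prod_congr rfl fun j hj => ?_
  rw [Finset.mem_range] at hj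
  have hN' : (N : ℝ) ≠ 0 := by exact_mod_cast hN
  have : (x + N ^ K * n) / (N : ℝ) ^ (j + 1) = x / N ^ (j + 1) + ((N ^ (K - (j + 1)) * n : ℤ) : ℝ) := by
    obtain ⟨d, rfl⟩ := Nat.exists_eq_add_of_lt hj
    rw [show j + d + 1 - (j + 1) = d by omega]
    push_cast
    field_simp
    ring
  rw [this, mB_add_int]

lemma PK_succ (N : ℕ) (B : Finset ℤ) (K : ℕ) (x : ℝ) :
    PK N B (K + 1) x = PK N B K x * mB B (x / N ^ (K + 1)) := by
  unfold PK; rw [Finset.prod_range_succ]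

noncomputable def ft (μ : Measure ℝ) (x : ℝ) : ℂ := ∫ y, ex (x * y) ∂μ

lemma ex_cont : Continuous ex := by unfold ex; fun_prop

lemma ft_cont (μ : Measure ℝ) [IsProbabilityMeasure μ] : Continuous (ft μ) := by
  unfold ft
  refine continuous_of_dominated (bound := fun _ => 1) ?_ ?_ ?_ ?_
  · intro x; exact (ex_cont.comp (by fun_prop)).aestronglyMeasurable
  · intro x; exact Filter.Eventually.of_forall fun y => (norm_ex _).le
  · exact integrable_const _
  · exact Filter.Eventually.of_forall fun y => ex_cont.comp (by fun_prop)

lemma ft_zero (μ : Measure ℝ) [IsProbabilityMeasure μ] : ft μ 0 = 1 := by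
  simp [ft, ex_zero]

lemma ft_eq {N : ℕ} {B : Finset ℤ} (μ : Measure ℝ) [IsProbabilityMeasure μ]
    (hμ : μ = (B.card : ℝ≥0∞)⁻¹ •
      ∑ b ∈ B, Measure.map (fun x : ℝ => (x + (b : ℝ)) / (N : ℝ)) μ) (x : ℝ) :
    ft μ x = mB B (x / N) * ft μ (x / N) := by
  have hm : ∀ b : ℤ, Measurable (fun x : ℝ => (x + (b : ℝ)) / (N : ℝ)) := by intro b; fun_prop
  have hc : Continuous fun y : ℝ => ex (x * y) := ex_cont.comp (by fun_prop)
  have h1 : ft μ x = ∫ y, ex (x * y) ∂((B.card : ℝ≥0∞)⁻¹ •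
      ∑ b ∈ B, Measure.map (fun x : ℝ => (x + (b : ℝ)) / (N : ℝ)) μ) := by
    rw [← hμ]; rfl
  rw [h1, integral_smul_measure, integral_finsetSum_measure]
  · have : ∀ b ∈ B, ∫ y, ex (x * y) ∂(Measure.map (fun x : ℝ => (x + (b : ℝ)) / (N : ℝ)) μ) = ex (b * (x / N)) * ft μ (x / N) := by
      intro b _
      rw [integral_map (hm b).aemeasurable hc.aestronglyMeasurable]
      unfold ft
      rw [← integral_const_mul]
      congr 1; ext y
      rw [← ex_add]; congr 1; ring
    rw [Finset.sum_congr rfl this, ← Finset.sum_mul]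
    unfold mB
    simp [mul_assoc]
  · intro b _
    have := Measure.isProbabilityMeasure_map (μ := μ) (hm b).aemeasurable
    exact Integrable.of_bound hc.aestronglyMeasurable 1 (Filter.Eventually.of_forall fun y => (norm_ex _).le)

structure FE (N : ℕ) (B : Finset ℤ) (f : ℝ → ℂ) : Prop where
  cont : Continuous f
  zero : f 0 = 1
  eq : ∀ x, f x = mB B (x / N) * f (x / N)

lemma FE.PK {N : ℕ} {B : Finset ℤ} {f : ℝ → ℂ} (h : FE N B f) (K : ℕ) (x : ℝ) :
    f x = PK N B K x * f (x / N ^ K) := by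
  induction K with
  | zero => simp [_root_.PK]
  | succ K ih =>
    rw [ih, PK_succ, h.eq (x / N ^ K)]
    rw [div_div, ← pow_succ]; ring

lemma tendsto_div_pow {N : ℕ} (hN : 2 ≤ N) (x : ℝ) :
    Filter.Tendsto (fun K : ℕ => x / (N : ℝ) ^ K) Filter.atTop (nhds 0) := by
  have : (1 : ℝ) < N := by exact_mod_cast hN
  exact tendsto_const_nhds.div_atTop (tendsto_pow_atTop_atTop_of_one_lt this)

lemma zeros_finite {N : ℕ} {B : Finset ℤ} {f : ℝ → ℂ} (h : FE N B f) (hN : 2 ≤ N) (hB : 2 ≤ B.card) (w : ℕ) :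
    {x : ℝ | x ∈ Set.Icc 0 1 ∧ f (w * x) = 0}.Finite := by
  have hN' : (1 : ℝ) < N := by exact_mod_cast hN
  have hne : ∀ᶠ y in nhds (0 : ℝ), f y ≠ 0 :=
    h.cont.continuousAt.eventually_ne (by rw [h.zero]; exact one_ne_zero)
  obtain ⟨δ, hδ, hball⟩ := Metric.eventually_nhds_iff.1 hne
  obtain ⟨p, hp⟩ := ((tendsto_div_pow hN w).eventually (Metric.ball_mem_nhds 0 hδ)).exists
  have hNp : (0 : ℝ) < (N : ℝ) ^ p := by positivity
  rw [Real.dist_eq, sub_zero, abs_of_nonneg (by positivity)] at hp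
  by_contra hinf
  have hinf : {x : ℝ | x ∈ Set.Icc 0 1 ∧ f (w * x) = 0}.Infinite := hinf
  obtain ⟨z, hz, hacc⟩ := hinf.exists_accPt_of_subset_isCompact (isCompact_Icc (a := (0 : ℝ)) (b := 1)) (fun x hx => hx.1)
  have han : AnalyticOnNhd ℝ (fun x : ℝ => PK N B p (w * x)) Set.univ := by
    intro x _
    unfold PK mB ex
    apply Finset.analyticAt_fun_prod
    intro j _
    apply AnalyticAt.mul analyticAt_const
    apply Finset.analyticAt_fun_sum
    intro b _
    refine AnalyticAt.comp (g := Complex.exp) (AnalyticAt.restrictScalars (𝕜 := ℝ) (𝕜' := ℂ) analyticAt_cexp) ?_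
    apply AnalyticAt.mul analyticAt_const
    refine AnalyticAt.comp (g := fun y : ℝ => (y : ℂ)) (f := fun a : ℝ => (b : ℝ) * (w * a / (N : ℝ) ^ (j + 1))) (Complex.ofRealCLM.analyticAt _) ?_
    simp only [div_eq_mul_inv]
    fun_prop
  have hfreq : ∃ᶠ x in nhdsWithin z {z}ᶜ, PK N B p (w * x) = 0 := by
    rw [accPt_iff_frequently_nhdsNE] at hacc
    refine hacc.mono ?_
    rintro x ⟨hx, hx0⟩
    rw [h.PK p] at hx0
    refine (mul_eq_zero.1 hx0).resolve_right (hball ?_)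
    rw [Real.dist_eq, sub_zero, abs_of_nonneg (div_nonneg (mul_nonneg (by positivity) hx.1) hNp.le)]
    refine lt_of_le_of_lt ?_ hp
    gcongr
    exact mul_le_of_le_one_right (by positivity) hx.2
  have := han.eqOn_zero_of_preconnected_of_frequently_eq_zero isPreconnected_univ (Set.mem_univ z) hfreq (Set.mem_univ 0)
  simp [PK_zero (show B.card ≠ 0 by omega)] at this

lemma two_children {N : ℕ} {B L : Finset ℤ} (h : Had N B L) (hlt : B.card < N) (w : ℕ) (hw : Nat.Coprime w N) (x : ℝ) :
    ∃ j1 j2 : ℕ, j1 < N ∧ j2 < N ∧ j1 ≠ j2 ∧ mB B (w * ((x + j1) / N)) ≠ 0 ∧ mB B (w * ((x + j2) / N)) ≠ 0 := by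
  have hN0 : N ≠ 0 := by have := h.1; omega
  have : NeZero N := ⟨hN0⟩
  have hNr : (N : ℝ) ≠ 0 := by exact_mod_cast hN0
  -- for each shift there is a child
  have key : ∀ s : ℤ, ∃ l ∈ L, mB B (w * ((x + (((l + s) : ℤ) : ℝ)) / N)) ≠ 0 := by
    intro s
    by_contra hcon
    push Not at hcon
    have := parseval h w hw (w * ((x + s) / N))
    rw [Finset.sum_eq_zero] at this
    · exact zero_ne_one this
    · intro l hl
      have h2 := hcon l hl
      rw [show (w : ℝ) * ((x + s) / N) + w * l / N = w * ((x + (((l + s) : ℤ) : ℝ)) / N) by push_cast; field_simp; ring, h2]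
      simp
  have red : ∀ z : ℤ, mB B (w * ((x + (z : ℝ)) / N)) ≠ 0 → mB B (w * ((x + ((z : ZMod N).val : ℝ)) / N)) ≠ 0 := by
    intro z hz
    have h1 : ((z : ZMod N).val : ℤ) = z % N := ZMod.val_intCast z
    have h2 : ((z : ZMod N).val : ℝ) = ((z % N : ℤ) : ℝ) := by exact_mod_cast congrArg (Int.cast : ℤ → ℝ) h1
    have h3 : (z : ℝ) = (N : ℝ) * ((z / N : ℤ) : ℝ) + ((z % N : ℤ) : ℝ) := by
      exact_mod_cast (Int.mul_ediv_add_emod z N).symm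
    have : (w : ℝ) * ((x + (z : ℝ)) / N) = (w * ((x + ((z : ZMod N).val : ℝ)) / N)) + ((w * (z / N) : ℤ) : ℝ) := by
      rw [h2, h3]; push_cast; field_simp; ring
    rwa [this, mB_add_int] at hz
  obtain ⟨l0, hl0, hm0⟩ := key 0
  have hns : ∃ r : ZMod N, ∀ l ∈ L, (l : ZMod N) ≠ r := by
    by_contra hcon
    push Not at hcon
    have : (Finset.univ : Finset (ZMod N)) ⊆ L.image (fun l : ℤ => (l : ZMod N)) := by
      intro r _
      obtain ⟨l, hl, e⟩ := hcon r
      exact Finset.mem_image.2 ⟨l, hl, e⟩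
    have := (Finset.card_le_card this).trans Finset.card_image_le
    rw [Finset.card_univ, ZMod.card, ← h.2.2.1] at this
    omega
  obtain ⟨r, hr⟩ := hns
  obtain ⟨l1, hl1, hm1⟩ := key (l0 - (r.val : ℤ))
  refine ⟨_, _, ZMod.val_lt _, ZMod.val_lt _, ?_, red _ hm0, red _ hm1⟩
  intro e
  have := ZMod.val_injective N e
  push_cast at this
  rw [ZMod.natCast_zmod_val] at this
  apply hr l1 hl1
  linear_combination -this

lemma ipzs {N : ℕ} {B L : Finset ℤ} {f : ℝ → ℂ} (hf : FE N B f) (h : Had N B L) (hlt : B.card < N) (w : ℕ) (hw : Nat.Coprime w N) (x : ℝ) :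
    ∃ k : ℤ, f (w * (x + k)) ≠ 0 := by
  have hN0 : N ≠ 0 := by have := h.1; omega
  have hNr : (0 : ℝ) < N := by exact_mod_cast Nat.pos_of_ne_zero hN0
  let Z : Set ℝ := {x | x ∈ Set.Ico 0 1 ∧ ∀ k : ℤ, f (w * (x + k)) = 0}
  have hZ : Z.Finite := (zeros_finite hf h.1 h.2.1 w).subset (by
    rintro y ⟨hy, hy2⟩
    refine ⟨Set.Ico_subset_Icc_self hy, ?_⟩
    have := hy2 0
    simpa using this)
  have := hZ.fintype
  choose j1 j2 hj1 hj2 hne hm1 hm2 using two_children h hlt w hw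
  have child : ∀ z : Z, ∀ j : ℕ, j < N → mB B (w * (((z : ℝ) + j) / N)) ≠ 0 → ((z : ℝ) + j) / N ∈ Z := by
    rintro ⟨z, hz, hz2⟩ j hj hm
    refine ⟨⟨div_nonneg (add_nonneg hz.1 (by positivity)) hNr.le, ?_⟩, ?_⟩
    · rw [div_lt_one hNr]
      have : (j : ℝ) + 1 ≤ N := by exact_mod_cast hj
      have := hz.2
      dsimp only
      linarith
    · intro k
      have h0 := hz2 (j + N * k)
      rw [hf.eq] at h0
      have e : (w : ℝ) * (z + ((j + N * k : ℤ) : ℝ)) / N = w * ((z + j) / N) + ((w * k : ℤ) : ℝ) := by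
        push_cast; field_simp; ring
      rw [e, mB_add_int] at h0
      have := (mul_eq_zero.1 h0).resolve_left hm
      refine Eq.trans ?_ this
      congr 1; push_cast; ring
  let φ : Z × Bool → Z := fun p => if p.2 then ⟨_, child p.1 (j1 p.1) (hj1 _) (hm1 _)⟩ else ⟨_, child p.1 (j2 p.1) (hj2 _) (hm2 _)⟩
  have aux : ∀ (z z' : Z) (j j' : ℕ), ((z : ℝ) + j) / N = ((z' : ℝ) + j') / N → z = z' ∧ j = j' := by
    rintro ⟨z, hz, _⟩ ⟨z', hz', _⟩ j j' e
    dsimp only at e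
    rw [div_left_inj' hNr.ne'] at e
    have h1 : j = j' := by
      have e1 := congrArg Int.floor e
      rw [Int.floor_add_natCast, Int.floor_add_natCast, Int.floor_eq_zero_iff.2 hz, Int.floor_eq_zero_iff.2 hz'] at e1
      simpa using e1
    subst h1
    exact ⟨Subtype.ext (by simpa using e), rfl⟩
  have hinj : Function.Injective φ := by
    rintro ⟨z, s⟩ ⟨z', s'⟩ e
    rcases s <;> rcases s' <;> simp only [φ, if_true, if_false, Bool.false_eq_true, Subtype.mk.injEq] at e <;> obtain ⟨e1, e2⟩ := aux _ _ _ _ e <;> subst e1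
    · rfl
    · exact absurd e2.symm (hne _)
    · exact absurd e2 (hne _)
    · rfl
  have hc := Fintype.card_le_of_injective φ hinj
  rw [Fintype.card_prod, Fintype.card_bool] at hc
  have hc0 : Fintype.card Z = 0 := by omega
  by_contra hcon
  push Not at hcon
  have hmem : Int.fract x ∈ Z := by
    refine ⟨⟨Int.fract_nonneg x, Int.fract_lt_one x⟩, fun k => ?_⟩
    have := hcon (k - ⌊x⌋)
    rw [← this]; congr 2; push_cast; rw [← Int.self_sub_floor]; ring
  exact (Fintype.card_eq_zero_iff.1 hc0).false ⟨_, hmem⟩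

lemma uniform_lb {N : ℕ} {B L : Finset ℤ} {f : ℝ → ℂ} (hf : FE N B f) (h : Had N B L) (hlt : B.card < N) (w : ℕ) (hw : Nat.Coprime w N) :
    ∃ δ > 0, ∃ c > 0, (∀ x : ℝ, ∃ k : ℤ, ∀ y : ℝ, |y| < δ → c ≤ ‖f (w * (x + k + y))‖) ∧
      (∀ y : ℝ, |y| < δ → c ≤ ‖f (w * y)‖) := by
  have hloc : ∀ x : ℝ, f (w * x) ≠ 0 → ∃ δ > 0, ∃ c > 0, ∀ y : ℝ, |y - x| < δ → c ≤ ‖f (w * y)‖ := by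
    intro x hx
    have hcont : Continuous fun y : ℝ => ‖f (w * y)‖ := by
      have := hf.cont
      fun_prop
    have hpos : 0 < ‖f (w * x)‖ := norm_pos_iff.2 hx
    have := hcont.continuousAt.eventually (lt_mem_nhds (half_lt_self hpos))
    obtain ⟨δ, hδ, hb⟩ := Metric.eventually_nhds_iff.1 this
    exact ⟨δ, hδ, _, half_pos hpos, fun y hy => (hb (by rwa [Real.dist_eq])).le⟩
  have main : ∃ δ > 0, ∃ c > 0, ∀ x ∈ Set.Icc (0 : ℝ) 1, ∃ k : ℤ, ∀ y : ℝ, |y| < δ → c ≤ ‖f (w * (x + k + y))‖ := by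
    refine isCompact_Icc.induction_on (p := fun s => ∃ δ > 0, ∃ c > 0, ∀ x ∈ s, ∃ k : ℤ, ∀ y : ℝ, |y| < δ → c ≤ ‖f (w * (x + k + y))‖) ?_ ?_ ?_ ?_
    · exact ⟨1, one_pos, 1, one_pos, fun x hx => absurd hx (Set.notMem_empty x)⟩
    · rintro s t hst ⟨δ, hδ, c, hc, H⟩
      exact ⟨δ, hδ, c, hc, fun x hx => H x (hst hx)⟩
    · rintro s t ⟨δ, hδ, c, hc, H⟩ ⟨δ', hδ', c', hc', H'⟩
      refine ⟨min δ δ', lt_min hδ hδ', min c c', lt_min hc hc', ?_⟩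
      rintro x (hx | hx)
      · obtain ⟨k, hk⟩ := H x hx
        exact ⟨k, fun y hy => (min_le_left _ _).trans (hk y (hy.trans_le (min_le_left _ _)))⟩
      · obtain ⟨k, hk⟩ := H' x hx
        exact ⟨k, fun y hy => (min_le_right _ _).trans (hk y (hy.trans_le (min_le_right _ _)))⟩
    · intro x _
      obtain ⟨k, hk⟩ := ipzs hf h hlt w hw x
      obtain ⟨δ, hδ, c, hc, H⟩ := hloc _ hk
      refine ⟨Metric.ball x (δ / 2), mem_nhdsWithin_of_mem_nhds (Metric.ball_mem_nhds _ (half_pos hδ)), δ / 2, half_pos hδ, c, hc, ?_⟩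
      intro z hz
      refine ⟨k, fun y hy => H _ ?_⟩
      rw [Metric.mem_ball, Real.dist_eq] at hz
      calc |z + k + y - (x + k)| = |(z - x) + y| := by congr 1; ring
        _ ≤ |z - x| + |y| := abs_add_le _ _
        _ < δ := by linarith
  obtain ⟨δ, hδ, c, hc, H⟩ := main
  obtain ⟨δ', hδ', c', hc', H'⟩ := hloc 0 (by rw [mul_zero, hf.zero]; exact one_ne_zero)
  refine ⟨min δ δ', lt_min hδ hδ', min c c', lt_min hc hc', ?_, ?_⟩
  · intro x
    obtain ⟨k, hk⟩ := H (Int.fract x) ⟨Int.fract_nonneg x, (Int.fract_lt_one x).le⟩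
    refine ⟨k - ⌊x⌋, fun y hy => ?_⟩
    have := hk y (hy.trans_le (min_le_left _ _))
    refine (min_le_left _ _).trans (this.trans (le_of_eq ?_))
    congr 3; push_cast; rw [← Int.self_sub_floor]; ring
  · intro y hy
    exact (min_le_right _ _).trans (H' y (by rw [sub_zero]; exact hy.trans_le (min_le_right _ _)))

lemma expFun_eq (l x : ℝ) : expFun l x = ex (l * x) := by
  unfold expFun ex; congr 1; push_cast; ring

lemma expFun_memLp (μ : Measure ℝ) [IsProbabilityMeasure μ] (l : ℝ) : MemLp (expFun l) 2 μ := by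
  refine MemLp.of_bound (Continuous.aestronglyMeasurable ?_) 1 (Filter.Eventually.of_forall fun x => ?_)
  · unfold expFun; fun_prop
  · rw [expFun_eq, norm_ex]

noncomputable def eLp (μ : Measure ℝ) [IsProbabilityMeasure μ] (l : ℝ) : Lp ℂ 2 μ :=
  (expFun_memLp μ l).toLp _

lemma eLp_coe (μ : Measure ℝ) [IsProbabilityMeasure μ] (l : ℝ) : (eLp μ l : ℝ → ℂ) =ᵐ[μ] expFun l :=
  (expFun_memLp μ l).coeFn_toLp

lemma inner_eLp (μ : Measure ℝ) [IsProbabilityMeasure μ] (g : Lp ℂ 2 μ) (a : ℝ) :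
    inner ℂ (eLp μ a) g = ∫ x, g x * ex (-(a * x)) ∂μ := by
  rw [L2.inner_def]
  refine integral_congr_ae ?_
  filter_upwards [eLp_coe μ a] with x hx
  rw [RCLike.inner_apply, hx, expFun_eq, ex_neg]

lemma inner_eLp_eLp (μ : Measure ℝ) [IsProbabilityMeasure μ] (a b : ℝ) :
    inner ℂ (eLp μ a) (eLp μ b) = ft μ (b - a) := by
  rw [inner_eLp]
  refine integral_congr_ae ?_
  filter_upwards [eLp_coe μ b] with x hx
  rw [hx, expFun_eq, ← ex_add]
  congr 1; ring

lemma orth_eLp (μ : Measure ℝ) [IsProbabilityMeasure μ] (S : Set ℝ)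
    (horth : ∀ a ∈ S, ∀ b ∈ S, a ≠ b → ft μ (a - b) = 0) :
    Orthonormal ℂ (fun s : S => eLp μ s) := by
  rw [orthonormal_iff_ite]
  intro i j
  rw [inner_eLp_eLp]
  split_ifs with h
  · subst h; rw [sub_self, ft_zero]
  · exact horth _ j.2 _ i.2 fun e => h (Subtype.ext e.symm)

lemma bessel_summable (μ : Measure ℝ) [IsProbabilityMeasure μ] (S : Set ℝ)
    (horth : ∀ a ∈ S, ∀ b ∈ S, a ≠ b → ft μ (a - b) = 0) (ξ : ℝ) :
    Summable (fun s : S => ‖ft μ (ξ + s)‖ ^ 2) := by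
  have := (orth_eLp μ S horth).inner_products_summable (eLp μ (-ξ))
  refine this.congr fun s => ?_
  rw [norm_inner_symm, inner_eLp_eLp, sub_neg_eq_add, add_comm]

/-- A real integrable function with vanishing Fourier transform vanishes. -/
lemma real_zero (μ : Measure ℝ) [IsProbabilityMeasure μ] (h : ℝ → ℝ) (hi : Integrable h μ)
    (h0 : ∀ a : ℝ, ∫ x, (h x : ℂ) * ex (a * x) ∂μ = 0) : h =ᵐ[μ] 0 := by
  have hip := hi.pos_part
  have hin := hi.neg_part
  let ν1 := μ.withDensity (fun x => ENNReal.ofReal (max (h x) 0))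
  let ν2 := μ.withDensity (fun x => ENNReal.ofReal (max (-h x) 0))
  have hf1 : IsFiniteMeasure ν1 := isFiniteMeasure_withDensity_ofReal hip.2
  have hf2 : IsFiniteMeasure ν2 := isFiniteMeasure_withDensity_ofReal hin.2
  have hint : ∀ (g : ℝ → ℝ), Integrable g μ → ∀ a : ℝ, Integrable (fun x => (g x : ℂ) * ex (a * x)) μ := by
    intro g hg a
    refine hg.ofReal.mul_bdd (c := 1) (ex_cont.comp (by fun_prop)).aestronglyMeasurable (Filter.Eventually.of_forall fun x => (norm_ex _).le)
  have hI : ∀ (g : ℝ → ℝ), Integrable g μ → (∀ x, 0 ≤ g x) → ∀ t : ℝ,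
      charFun (μ.withDensity (fun x => ENNReal.ofReal (g x))) t = ∫ x, (g x : ℂ) * ex (t / (2 * Real.pi) * x) ∂μ := by
    intro g hg hg0 t
    rw [charFun_apply_real, integral_withDensity_eq_integral_toReal_smul₀ hg.1.aemeasurable.ennreal_ofReal (Filter.Eventually.of_forall fun x => ENNReal.ofReal_lt_top)]
    congr 1; ext x
    rw [ENNReal.toReal_ofReal (hg0 x), Complex.real_smul]
    congr 1
    unfold ex
    congr 1
    push_cast
    have : (Real.pi : ℂ) ≠ 0 := by exact_mod_cast Real.pi_ne_zero
    field_simp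
  have heq : ν1 = ν2 := by
    apply Measure.ext_of_charFun
    ext t
    rw [hI _ hip (fun x => le_max_right _ _), hI _ hin (fun x => le_max_right _ _), ← sub_eq_zero,
      ← integral_sub (hint _ hip _) (hint _ hin _), ← h0 (t / (2 * Real.pi))]
    congr 1; ext x
    rw [← sub_mul]
    congr 1
    rw [← Complex.ofReal_sub]
    congr 1
    rcases le_total 0 (h x) with hx | hx
    · rw [max_eq_left hx, max_eq_right (by linarith)]; ring
    · rw [max_eq_right hx, max_eq_left (by linarith)]; ring
  have hae := (withDensity_eq_iff_of_sigmaFinite hip.1.aemeasurable.ennreal_ofReal hin.1.aemeasurable.ennreal_ofReal).1 heq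
  filter_upwards [hae] with x hx
  rw [ENNReal.ofReal_eq_ofReal_iff (le_max_right _ _) (le_max_right _ _)] at hx
  rcases le_total 0 (h x) with h' | h'
  · rw [max_eq_left h', max_eq_right (by linarith)] at hx; exact hx
  · rw [max_eq_right h', max_eq_left (by linarith)] at hx; simp; linarith

lemma eLp_total (μ : Measure ℝ) [IsProbabilityMeasure μ] (g : Lp ℂ 2 μ)
    (h : ∀ a : ℝ, inner ℂ (eLp μ a) g = 0) : g = 0 := by
  have hg : Integrable g μ := (Lp.memLp g).integrable (by norm_num)
  have hint : ∀ a : ℝ, Integrable (fun x => g x * ex (a * x)) μ := by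
    intro a
    refine hg.mul_bdd (c := 1) (ex_cont.comp (by fun_prop)).aestronglyMeasurable (Filter.Eventually.of_forall fun x => (norm_ex _).le)
  have hint' : ∀ a : ℝ, Integrable (fun x => (starRingEnd ℂ) (g x) * ex (a * x)) μ := by
    intro a
    have hc : Integrable (fun x => (starRingEnd ℂ) (g x)) μ :=
      (LinearIsometryEquiv.integrable_comp_iff (μ := μ) (φ := g) Complex.conjLIE).2 hg
    refine hc.mul_bdd (c := 1) (ex_cont.comp (by fun_prop)).aestronglyMeasurable (Filter.Eventually.of_forall fun x => (norm_ex _).le)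
  have h1 : ∀ a : ℝ, ∫ x, g x * ex (a * x) ∂μ = 0 := by
    intro a
    have := h (-a)
    rw [inner_eLp] at this
    simpa using this
  have h2 : ∀ a : ℝ, ∫ x, (starRingEnd ℂ) (g x) * ex (a * x) ∂μ = 0 := by
    intro a
    have := congrArg (starRingEnd ℂ) (h1 (-a))
    rw [← integral_conj, map_zero] at this
    rw [← this]
    congr 1; ext x
    rw [map_mul, ← ex_neg]; congr 2; ring
  have hre : (fun x => (g x).re) =ᵐ[μ] 0 := by
    refine real_zero μ _ hg.re fun a => ?_
    have := integral_add (hint a) (hint' a)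
    rw [h1, h2, add_zero] at this
    have h3 : ∀ x, ((g x).re : ℂ) * ex (a * x) = 2⁻¹ * (g x * ex (a * x) + (starRingEnd ℂ) (g x) * ex (a * x)) := by
      intro x; rw [← add_mul, Complex.add_conj]; push_cast; ring
    simp only [h3]
    rw [integral_const_mul, this, mul_zero]
  have him : (fun x => (g x).im) =ᵐ[μ] 0 := by
    refine real_zero μ _ hg.im fun a => ?_
    have := integral_sub (hint a) (hint' a)
    rw [h1, h2, sub_zero] at this
    have h3 : ∀ x, ((g x).im : ℂ) * ex (a * x) = (2 * Complex.I)⁻¹ * (g x * ex (a * x) - (starRingEnd ℂ) (g x) * ex (a * x)) := by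
      intro x; rw [← sub_mul, Complex.sub_conj]; push_cast; field_simp
    simp only [h3]
    rw [integral_const_mul, this, mul_zero]
  rw [Lp.eq_zero_iff_ae_eq_zero]
  filter_upwards [hre, him] with x hx hy
  exact Complex.ext hx hy

lemma spec_crit (μ : Measure ℝ) [IsProbabilityMeasure μ] (S : Set ℝ)
    (horth : ∀ a ∈ S, ∀ b ∈ S, a ≠ b → ft μ (a - b) = 0)
    (hpars : ∀ ξ : ℝ, 1 ≤ ∑' s : S, ‖ft μ (ξ + s)‖ ^ 2) : IsSpectrum μ S := by
  have hO := orth_eLp μ S horth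
  refine ⟨fun s => eLp μ s, fun s => eLp_coe μ s, hO, ?_⟩
  set V := (Submodule.span ℂ (Set.range fun s : S => eLp μ s)).topologicalClosure with hV
  have hVc : IsClosed (V : Set (Lp ℂ 2 μ)) := Submodule.isClosed_topologicalClosure _
  have : CompleteSpace V := hVc.completeSpace_coe
  have hmem : ∀ a : ℝ, eLp μ a ∈ V := by
    intro a
    have hb := hO.tsum_inner_products_le (V.starProjection (eLp μ a))
    have he : ∀ s : S, ‖inner ℂ (eLp μ s) (V.starProjection (eLp μ a))‖ ^ 2 = ‖ft μ (-a + s)‖ ^ 2 := by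
      intro s
      have hs : eLp μ s ∈ V := Submodule.le_topologicalClosure _ (Submodule.subset_span ⟨s, rfl⟩)
      rw [← Submodule.inner_starProjection_left_eq_right, Submodule.starProjection_eq_self_iff.2 hs,
        norm_inner_symm, inner_eLp_eLp]
      congr 3; ring
    rw [tsum_congr he] at hb
    have h1 := (hpars (-a)).trans hb
    have hn : ‖eLp μ a‖ = 1 := by
      have : inner ℂ (eLp μ a) (eLp μ a) = 1 := by rw [inner_eLp_eLp, sub_self, ft_zero]
      have : ‖eLp μ a‖ ^ 2 = 1 := by rw [norm_sq_eq_re_inner (𝕜 := ℂ), this]; simp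
      nlinarith [norm_nonneg (eLp μ a)]
    have hpy := Submodule.norm_sq_eq_add_norm_sq_starProjection (eLp μ a) V
    rw [hn] at hpy
    have h2 : ‖Vᗮ.starProjection (eLp μ a)‖ = 0 := by
      nlinarith [norm_nonneg (Vᗮ.starProjection (eLp μ a)), sq_nonneg ‖Vᗮ.starProjection (eLp μ a)‖]
    rw [norm_eq_zero, Submodule.starProjection_orthogonal_val, sub_eq_zero] at h2
    exact Submodule.starProjection_eq_self_iff.1 h2.symm
  have hbot : Vᗮ = ⊥ := by
    rw [Submodule.eq_bot_iff]
    intro g hg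
    exact eLp_total μ g fun a => (Submodule.mem_orthogonal V g).1 hg _ (hmem a)
  exact (Submodule.orthogonal_eq_bot_iff).1 hbot

def Good (N : ℕ) (B : Finset ℤ) (A : Finset ℤ) (K : ℕ) : Prop :=
  ∀ w : ℕ, Nat.Coprime w N → ∀ ξ : ℝ, ∑ a ∈ A, ‖PK N B K (ξ + w * a)‖ ^ 2 = 1

lemma Good.orth {N : ℕ} {B A : Finset ℤ} {K : ℕ} (hB : B.card ≠ 0) (h : Good N B A K) {w : ℕ} (hw : Nat.Coprime w N)
    {a b : ℤ} (ha : a ∈ A) (hb : b ∈ A) (hab : a ≠ b) : PK N B K (w * a - w * b) = 0 := by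
  have h1 := h w hw (-(w * b))
  rw [← Finset.add_sum_erase _ _ hb, neg_add_cancel, PK_zero hB] at h1
  have h2 : ∑ x ∈ A.erase b, ‖PK N B K (-(w * b) + w * x)‖ ^ 2 = 0 := by
    simpa using h1
  rw [Finset.sum_eq_zero_iff_of_nonneg (fun _ _ => by positivity)] at h2
  have h3 := h2 a (Finset.mem_erase.2 ⟨hab, ha⟩)
  rw [show (w : ℝ) * a - w * b = -(w * b) + w * a by ring]
  simpa using h3

lemma Good.inj {N : ℕ} {B A : Finset ℤ} {K : ℕ} (hN : N ≠ 0) (hB : B.card ≠ 0) (h : Good N B A K)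
    {a b : ℤ} (ha : a ∈ A) (hb : b ∈ A) (n : ℤ) (e : a = b + N ^ K * n) : a = b := by
  by_contra hab
  have h1 := h.orth hB (Nat.coprime_one_left N) ha hb hab
  rw [e] at h1
  have e2 : ((1 : ℕ) : ℝ) * ((b + N ^ K * n : ℤ) : ℝ) - ((1 : ℕ) : ℝ) * b = 0 + N ^ K * n := by push_cast; ring
  rw [e2, PK_add hN, PK_zero hB] at h1
  exact one_ne_zero h1

lemma Good.ext {N : ℕ} {B L A : Finset ℤ} {K : ℕ} (hH : Had N B L) (h : Good N B A K) :
    Good N B ((A ×ˢ L).image (fun p => p.1 + N ^ K * p.2)) (K + 1) := by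
  have hN : N ≠ 0 := by have := hH.1; omega
  have hB : B.card ≠ 0 := by have := hH.2.1; omega
  have hNr : (N : ℝ) ≠ 0 := by exact_mod_cast hN
  intro w hw ξ
  rw [Finset.sum_image, Finset.sum_product]
  · rw [← h w hw ξ]
    refine Finset.sum_congr rfl fun a _ => ?_
    have e : ∀ l : ℤ, ‖PK N B (K + 1) (ξ + w * ((a + N ^ K * l : ℤ) : ℝ))‖ ^ 2 =
        ‖PK N B K (ξ + w * a)‖ ^ 2 * ‖mB B ((ξ + w * a) / N ^ (K + 1) + w * l / N)‖ ^ 2 := by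
      intro l
      have e1 : ξ + (w : ℝ) * ((a + N ^ K * l : ℤ) : ℝ) = ξ + w * a + N ^ K * ((w * l : ℤ) : ℝ) := by push_cast; ring
      rw [PK_succ, e1, PK_add hN, norm_mul, mul_pow]
      congr 4
      push_cast; field_simp; ring
    simp only [e]
    rw [← Finset.mul_sum, parseval hH w hw, mul_one]
  · rintro ⟨a, l⟩ hp ⟨a', l'⟩ hp' e
    simp only [Finset.coe_product, Set.mem_prod, Finset.mem_coe] at hp hp' e
    have ha : a = a' := h.inj hN hB hp.1 hp'.1 (l' - l) (by linear_combination e)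
    subst ha
    have hNK : (N : ℤ) ^ K ≠ 0 := pow_ne_zero _ (by exact_mod_cast hN)
    have : l = l' := mul_left_cancel₀ hNK (by linear_combination e)
    rw [this]

lemma Good.mod {N : ℕ} {B A : Finset ℤ} {K : ℕ} (hN : N ≠ 0) (hB : B.card ≠ 0) (h : Good N B A K) (k : ℤ → ℤ) :
    Good N B (A.image (fun a => a + N ^ K * k a)) K := by
  intro w hw ξ
  rw [Finset.sum_image]
  · rw [← h w hw ξ]
    refine Finset.sum_congr rfl fun a _ => ?_
    have e1 : ξ + (w : ℝ) * ((a + N ^ K * k a : ℤ) : ℝ) = ξ + w * a + N ^ K * ((w * k a : ℤ) : ℝ) := by push_cast; ring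
    rw [e1, PK_add hN]
  · intro a ha a' ha' e
    exact h.inj hN hB ha ha' (k a' - k a) (by dsimp only at e; linear_combination e)

lemma Good.extend {N : ℕ} {B L A : Finset ℤ} {K : ℕ} (hH : Had N B L) (hL : 0 ∈ L) (h : Good N B A K) (p : ℕ) :
    ∃ A', A ⊆ A' ∧ Good N B A' (K + p) := by
  induction p with
  | zero => exact ⟨A, subset_rfl, h⟩
  | succ p ih =>
    obtain ⟨A', hA, hG⟩ := ih
    refine ⟨_, fun a ha => ?_, hG.ext hH⟩
    exact Finset.mem_image.2 ⟨(a, 0), Finset.mem_product.2 ⟨hA ha, hL⟩, by simp⟩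

lemma step {N : ℕ} {B L : Finset ℤ} {f : ℝ → ℂ} (hf : FE N B f) (hH : Had N B L) (hL : 0 ∈ L) (hlt : B.card < N)
    (w : ℕ) (hw : Nat.Coprime w N) :
    ∃ δ > 0, ∃ c > 0, ∀ A K, Good N B A K → ∃ A' K', K < K' ∧ A ⊆ A' ∧ Good N B A' K' ∧
      ∀ a ∈ A', ∀ y : ℝ, |y| < δ → c ≤ ‖f (w * (a / N ^ K' + y))‖ := by
  have hN : N ≠ 0 := by have := hH.1; omega
  have hB : B.card ≠ 0 := by have := hH.2.1; omega
  have hNr : (N : ℝ) ≠ 0 := by exact_mod_cast hN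
  obtain ⟨δ, hδ, c, hc, H1, H2⟩ := uniform_lb hf hH hlt w hw
  refine ⟨δ / 2, half_pos hδ, c, hc, fun A K hG => ?_⟩
  have hev : ∀ᶠ p : ℕ in Filter.atTop, ∀ a ∈ A, |(a : ℝ) / N ^ p| < δ / 2 := by
    rw [Filter.eventually_all_finset]
    intro a _
    have := (tendsto_div_pow hH.1 a).eventually (Metric.ball_mem_nhds 0 (half_pos hδ))
    filter_upwards [this] with p hp
    simpa [Real.dist_eq, abs_div] using hp
  obtain ⟨p, hp, hpK⟩ := (hev.and (Filter.eventually_gt_atTop K)).exists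
  obtain ⟨q, rfl⟩ := Nat.exists_eq_add_of_lt hpK
  obtain ⟨A1, hA1, hG1⟩ := hG.extend hH hL (q + 1)
  rw [← add_assoc] at hG1
  choose kf hkf using fun a : ℤ => H1 ((a : ℝ) / N ^ (K + q + 1))
  classical
  refine ⟨_, _, hpK, ?_, hG1.mod hN hB (fun a => if a ∈ A then 0 else kf a), ?_⟩
  · intro a ha
    exact Finset.mem_image.2 ⟨a, hA1 ha, by simp [ha]⟩
  · intro a' ha' y hy
    obtain ⟨a, ha, rfl⟩ := Finset.mem_image.1 ha'
    by_cases haA : a ∈ A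
    · simp only [haA, if_true, mul_zero, add_zero]
      apply H2
      have := hp a haA
      calc _ ≤ |(a : ℝ) / N ^ (K + q + 1)| + |y| := abs_add_le _ _
        _ < δ := by linarith
    · simp only [haA, if_false]
      have := hkf a y (by linarith)
      refine this.trans (le_of_eq ?_)
      congr 3
      push_cast
      field_simp

lemma universal {N : ℕ} {B L : Finset ℤ} (μ : Measure ℝ) [IsProbabilityMeasure μ] (hf : FE N B (ft μ))
    (hH : Had N B L) (hL : 0 ∈ L) (hlt : B.card < N) :
    ∃ Λ : Set ℤ, 0 ∈ Λ ∧ (∃ z ∈ Λ, z ≠ 0) ∧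
      ∀ w : ℕ, Nat.Coprime w N → IsSpectrum μ ((fun n : ℤ => (w : ℝ) * n) '' Λ) := by
  have hN : N ≠ 0 := by have := hH.1; omega
  have hB : B.card ≠ 0 := by have := hH.2.1; omega
  have hNr : (N : ℝ) ≠ 0 := by exact_mod_cast hN
  have hNr' : (0 : ℝ) < N := by exact_mod_cast Nat.pos_of_ne_zero hN
  choose! δ hδ c hc Anx Knx hK hA hG hlb using fun w hw => step hf hH hL hlt w hw
  have hWe : ∃ W : ℕ → ℕ, (∀ n, Nat.Coprime (W n) N) ∧ ∀ w, Nat.Coprime w N → ∀ j, W (Nat.pair w j) = w := by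
    refine ⟨fun n => if Nat.Coprime (Nat.unpair n).1 N then (Nat.unpair n).1 else 1, fun n => ?_, fun w hw j => ?_⟩
    · dsimp only; split_ifs with h
      · exact h
      · exact Nat.coprime_one_left N
    · simp [hw]
  obtain ⟨W, hW, hWp⟩ := hWe
  have hL1 : Good N B L 1 := by
    have h0 : Good N B {0} 0 := by intro w _ ξ; simp [PK]
    have := h0.ext hH
    convert this using 1
    ext z; simp
  let S : ℕ → Finset ℤ × ℕ := fun n => Nat.rec (L, 1) (fun n s => (Anx (W n) s.1 s.2, Knx (W n) s.1 s.2)) n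
  have hS0 : S 0 = (L, 1) := rfl
  have hSs : ∀ n, S (n + 1) = (Anx (W n) (S n).1 (S n).2, Knx (W n) (S n).1 (S n).2) := fun n => rfl
  have hSG : ∀ n, Good N B (S n).1 (S n).2 := by
    intro n
    induction n with
    | zero => exact hL1
    | succ n ih => rw [hSs]; exact hG _ (hW n) _ _ ih
  have hSmono : Monotone fun n => (S n).1 := monotone_nat_of_le_succ fun n => by
    rw [hSs]; exact hA _ (hW n) _ _ (hSG n)
  have hSK : StrictMono fun n => (S n).2 := strictMono_nat_of_lt_succ fun n => by
    rw [hSs n]; exact hK _ (hW n) _ _ (hSG n)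
  let Λ : Set ℤ := {z | ∃ n, z ∈ (S n).1}
  refine ⟨Λ, ⟨0, hL⟩, ?_, ?_⟩
  · have : 1 < L.card := by have := hH.2.1; have := hH.2.2.1; omega
    obtain ⟨z, hz, hz0⟩ := Finset.exists_mem_ne this 0
    exact ⟨z, ⟨0, hz⟩, hz0⟩
  intro w hw
  have hw0 : (w : ℝ) ≠ 0 := by
    have : w ≠ 0 := by
      rintro rfl
      rw [Nat.coprime_zero_left] at hw
      have := hH.1
      omega
    exact_mod_cast this
  have hinj : Function.Injective (fun n : ℤ => (w : ℝ) * n) := by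
    intro a b e
    exact_mod_cast mul_left_cancel₀ hw0 e
  have horth : ∀ a ∈ ((fun n : ℤ => (w : ℝ) * n) '' Λ), ∀ b ∈ ((fun n : ℤ => (w : ℝ) * n) '' Λ), a ≠ b → ft μ (a - b) = 0 := by
    rintro _ ⟨a, ⟨n, ha⟩, rfl⟩ _ ⟨b, ⟨m, hb⟩, rfl⟩ hab
    have hab' : a ≠ b := fun e => hab (by rw [e])
    have h1 := (hSG (max n m)).orth hB hw (hSmono (le_max_left n m) ha) (hSmono (le_max_right n m) hb) hab'
    dsimp only
    rw [hf.PK (S (max n m)).2, h1, zero_mul]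
  refine spec_crit μ _ horth fun ξ => ?_
  have hsum := bessel_summable μ _ horth ξ
  have hsum' : Summable (fun s : Λ => ‖ft μ (ξ + w * (s : ℤ))‖ ^ 2) := by
    exact (Equiv.summable_iff (Equiv.Set.image _ Λ hinj)).2 hsum
  have htsum : ∑' s : ((fun n : ℤ => (w : ℝ) * n) '' Λ), ‖ft μ (ξ + s)‖ ^ 2 = ∑' s : Λ, ‖ft μ (ξ + w * (s : ℤ))‖ ^ 2 :=
    ((Equiv.Set.image _ Λ hinj).tsum_eq (fun s : ((fun n : ℤ => (w : ℝ) * n) '' Λ) => ‖ft μ (ξ + s)‖ ^ 2)).symm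
  rw [htsum]
  let T : ℕ → Finset ℤ × ℕ := fun j => S (Nat.pair w j + 1)
  have hnj : StrictMono fun j => Nat.pair w j + 1 := fun i j hij => by
    have := Nat.pair_lt_pair_right w hij
    dsimp only; omega
  have hTK : Filter.Tendsto (fun j => (T j).2) Filter.atTop Filter.atTop := (hSK.comp hnj).tendsto_atTop
  have hTlb : ∀ j, ∀ a ∈ (T j).1, ∀ y : ℝ, |y| < δ w → c w ≤ ‖ft μ (w * (a / N ^ (T j).2 + y))‖ := by
    intro j
    have := hlb (W (Nat.pair w j)) (hW _) _ _ (hSG (Nat.pair w j))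
    simp only [T, hSs]
    rw [hWp w hw j] at this ⊢
    exact this
  classical
  let G : ℕ → Λ → ℝ := fun j s => if (s : ℤ) ∈ (T j).1 then ‖PK N B (T j).2 (ξ + w * (s : ℤ))‖ ^ 2 else 0
  have hG1 : ∀ j, ∑' s : Λ, G j s = 1 := by
    intro j
    rw [← hSG (Nat.pair w j + 1) w hw ξ]
    have : ∀ s : Λ, G j s = (fun z : ℤ => if z ∈ (T j).1 then ‖PK N B (T j).2 (ξ + w * z)‖ ^ 2 else 0) s := fun s => rfl
    rw [tsum_congr this, tsum_subtype Λ (fun z : ℤ => if z ∈ (T j).1 then ‖PK N B (T j).2 (ξ + w * z)‖ ^ 2 else 0),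
      tsum_eq_sum (s := (T j).1)]
    · refine Finset.sum_congr rfl fun z hz => ?_
      rw [Set.indicator_of_mem (show z ∈ Λ from ⟨Nat.pair w j + 1, hz⟩), if_pos hz]
    · intro z hz
      simp [hz]
  have hlim : ∀ s : Λ, Filter.Tendsto (fun j => G j s) Filter.atTop (nhds (‖ft μ (ξ + w * (s : ℤ))‖ ^ 2)) := by
    rintro ⟨z, n, hz⟩
    dsimp only
    have h1 : Filter.Tendsto (fun j => ft μ ((ξ + w * z) / N ^ (T j).2)) Filter.atTop (nhds 1) := by
      rw [← hf.zero]
      exact (hf.cont.tendsto 0).comp ((tendsto_div_pow hH.1 _).comp hTK)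
    have h2 : Filter.Tendsto (fun j => ‖ft μ (ξ + w * z) / ft μ ((ξ + w * z) / N ^ (T j).2)‖ ^ 2) Filter.atTop (nhds (‖ft μ (ξ + w * z)‖ ^ 2)) := by
      have := ((tendsto_const_nhds (x := ft μ (ξ + w * z))).div h1 one_ne_zero).norm.pow 2
      simpa using this
    refine h2.congr' ?_
    filter_upwards [h1.eventually_ne one_ne_zero, Filter.eventually_ge_atTop n] with j hj hjn
    have hmem : z ∈ (T j).1 := hSmono ((hjn.trans (Nat.right_le_pair w j)).trans (Nat.le_succ _)) hz
    simp only [G, hmem, if_true]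
    congr 2
    rw [div_eq_iff hj]
    exact hf.PK _ _
  have hdom : ∀ᶠ j in Filter.atTop, ∀ s : Λ, ‖G j s‖ ≤ (c w ^ 2)⁻¹ * ‖ft μ (ξ + w * (s : ℤ))‖ ^ 2 := by
    have hsm := ((tendsto_div_pow hH.1 (ξ / w)).comp hTK).eventually (Metric.ball_mem_nhds 0 (hδ w hw))
    filter_upwards [hsm] with j hj
    rintro ⟨z, hz⟩
    have hy : |ξ / w / N ^ (T j).2| < δ w := by simpa [Real.dist_eq, abs_div] using hj
    have hcw := hc w hw
    dsimp only [G]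
    split_ifs with hm
    · have hl := hTlb j z hm _ hy
      have e : (w : ℝ) * (z / N ^ (T j).2 + ξ / w / N ^ (T j).2) = (ξ + w * z) / N ^ (T j).2 := by
        field_simp; ring
      rw [e] at hl
      rw [hf.PK (T j).2 (ξ + w * z), norm_mul, mul_pow, Real.norm_of_nonneg (by positivity)]
      rw [inv_mul_eq_div, le_div_iff₀ (by positivity)]
      gcongr
    · simp; positivity
  have hfin := tendsto_tsum_of_dominated_convergence (hsum'.mul_left (c w ^ 2)⁻¹) hlim hdom
  simp only [hG1] at hfin
  exact (tendsto_nhds_unique hfin tendsto_const_nhds).ge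

lemma exists_had {N : ℕ} {B L : Finset ℤ} (h : IsHadamardTriple N B L) :
    ∃ L' : Finset ℤ, 0 ∈ L' ∧ Had N B L' := by
  obtain ⟨hN, hB, hBL, hH⟩ := h
  have hne : L.Nonempty := by rw [← Finset.card_pos]; omega
  obtain ⟨l0, hl0⟩ := hne
  refine ⟨L.image (fun l => l - l0), Finset.mem_image.2 ⟨l0, hl0, sub_self _⟩, hN, hB, ?_, ?_⟩
  · rw [Finset.card_image_of_injective _ sub_left_injective, hBL]
  · intro w hw l hl l' hl' hne
    obtain ⟨m, hm, rfl⟩ := Finset.mem_image.1 hl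
    obtain ⟨m', hm', rfl⟩ := Finset.mem_image.1 hl'
    refine galois N (by omega) B (fun b => b * (m - l0 - (m' - l0))) w hw ?_
    rw [← hH m hm m' hm' (fun e => hne (by rw [e]))]
    refine Finset.sum_congr rfl fun b _ => ?_
    unfold ex
    congr 1
    push_cast
    ring

theorem eigen_subspace_infinite (N : ℕ) (B L : Finset ℤ)
    (h : IsHadamardTriple N B L) (hBN : B.card < N)
    (μ : Measure ℝ) [IsProbabilityMeasure μ]
    (hμ : μ = (B.card : ℝ≥0∞)⁻¹ •
      ∑ b ∈ B, Measure.map (fun x : ℝ => (x + (b : ℝ)) / (N : ℝ)) μ)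
    (k : ℕ) (t : Fin k → ℝ) (ht : ∀ i, t i ∈ eigenSet N) :
    { Λ : Set ℝ | (0 : ℝ) ∈ Λ ∧ IsSpectrum μ Λ ∧
        ∀ i, IsSpectrum μ ((fun x : ℝ => t i * x) '' Λ) }.Infinite := by
  obtain ⟨L', h0, hH⟩ := exists_had h
  have hN := h.1
  have hf : FE N B (ft μ) := ⟨ft_cont μ, ft_zero μ, ft_eq μ hμ⟩
  obtain ⟨Λ, hΛ0, ⟨z, hz, hz0⟩, hsp⟩ := universal μ hf hH h0 hBN
  choose u v hu hv huv hc hte using ht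
  let U := ∏ i, u i
  have hU : Nat.Coprime U N := Nat.Coprime.prod_left fun i _ => Nat.Coprime.coprime_mul_right (hc i)
  have hU0 : 0 < U := Finset.prod_pos fun i _ => hu i
  have hs : ∀ j, Nat.Coprime ((N + 1) ^ j) N := fun j => Nat.Coprime.pow_left _ (by simp)
  let F : ℕ → Set ℝ := fun j => (fun n : ℤ => ((U * (N + 1) ^ j : ℕ) : ℝ) * n) '' Λ
  have hF : ∀ j, F j ∈ { Λ : Set ℝ | (0 : ℝ) ∈ Λ ∧ IsSpectrum μ Λ ∧
        ∀ i, IsSpectrum μ ((fun x : ℝ => t i * x) '' Λ) } := by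
    intro j
    refine ⟨⟨0, hΛ0, by simp⟩, hsp _ (Nat.Coprime.mul_left hU (hs j)), fun i => ?_⟩
    obtain ⟨q, hq⟩ : u i ∣ U := Finset.dvd_prod_of_mem u (Finset.mem_univ i)
    have hqc : Nat.Coprime q N := by
      rw [hq] at hU; exact Nat.Coprime.coprime_mul_left hU
    have := hsp (v i * q * (N + 1) ^ j) (((Nat.Coprime.coprime_mul_left (hc i)).mul_left hqc).mul_left (hs j))
    convert this using 1
    simp only [F, Set.image_image]
    refine Set.image_congr fun n _ => ?_
    have hui : (u i : ℝ) ≠ 0 := by exact_mod_cast (hu i).ne'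
    rw [hte i, hq]
    push_cast
    field_simp
  intro hfin
  have := hfin.to_subtype
  obtain ⟨y, hy⟩ := Finite.exists_infinite_fiber (fun j : ℕ => (⟨F j, hF j⟩ : { Λ : Set ℝ | (0 : ℝ) ∈ Λ ∧ IsSpectrum μ Λ ∧
        ∀ i, IsSpectrum μ ((fun x : ℝ => t i * x) '' Λ) }))
  rw [Set.infinite_coe_iff] at hy
  obtain ⟨j0, hj0⟩ := hy.nonempty
  have hzF : ((U * (N + 1) ^ j0 : ℕ) : ℝ) * z ∈ F j0 := ⟨z, hz, rfl⟩
  let Y : ℤ := ((U * (N + 1) ^ j0 : ℕ) : ℤ) * z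
  have hY0 : Y ≠ 0 := mul_ne_zero (by positivity) hz0
  obtain ⟨j, hj, hjlt⟩ := hy.exists_gt Y.natAbs
  have hEq : F j0 = F j := by
    have h1 := congrArg Subtype.val (show _ = _ from hj0)
    have h2 := congrArg Subtype.val (show _ = _ from hj)
    exact h1.trans h2.symm
  rw [hEq] at hzF
  obtain ⟨m, hm, e⟩ := hzF
  have e' : ((U * (N + 1) ^ j : ℕ) : ℤ) * m = Y := by
    dsimp only at e
    simp only [Y]; exact_mod_cast e
  have hd : (N + 1) ^ j ∣ Y.natAbs := by
    rw [← e', Int.natAbs_mul, Int.natAbs_natCast, mul_assoc]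
    exact Dvd.dvd.mul_left (Dvd.intro _ rfl) _
  have hle := Nat.le_of_dvd (Int.natAbs_pos.2 hY0) hd
  have : j < (N + 1) ^ j := Nat.lt_pow_self (by omega)
  omega
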